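/- arXiv:2603.18177 — 2 statements merged into one kernel-verified Lean document; each statement's English description precedes it below -/
import Mathlib

section
/- Let W be an m×n real matrix, q ∈ ℝⁿ, b ∈ ℝᵐ. If both the primal feasible set { y ∈ ℝⁿ : W y ≥ b } and the dual feasible set { γ ∈ ℝᵐ : γ ≥ 0, Wᵀγ = q } are nonempty, then sInf { qᵀy : W y ≥ b } = sSup { γᵀb : γ ≥ 0, Wᵀγ = q }, and both values are finite. In particular, with b = h − T x, the second-stage value function Q(x) is exactly the supremum of the Benders' cut values γᵀ(h − T x) over all dual-feasible γ, so the outer problem using the full set of dual-feasible multipliers represents Q exactly. -/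
open Matrix

/-- Algebraic Farkas lemma (Bartl's induction). -/
theorem farkas_aux {V : Type*} [AddCommGroup V] [Module ℝ V] (m : ℕ) :
    ∀ (a : Fin m → (V →ₗ[ℝ] ℝ)) (c : V →ₗ[ℝ] ℝ),
      (∀ x, (∀ i, 0 ≤ a i x) → 0 ≤ c x) →
      ∃ l : Fin m → ℝ, (∀ i, 0 ≤ l i) ∧ ∀ x, c x = ∑ i, l i * a i x := by
  induction m with
  | zero =>
    intro a c h
    refine ⟨fun _ => 0, fun _ => le_rfl, fun x => ?_⟩
    have h1 := h x (fun i => i.elim0)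
    have h2 := h (-x) (fun i => i.elim0)
    rw [map_neg] at h2
    simp
    linarith
  | succ m ih =>
    intro a c h
    by_cases hc : ∀ x, (∀ i : Fin m, 0 ≤ a i.succ x) → 0 ≤ c x
    · obtain ⟨l, hl, hx⟩ := ih (fun i => a i.succ) c hc
      refine ⟨Fin.cons 0 l, fun i => ?_, fun x => ?_⟩
      · refine Fin.cases ?_ (fun j => ?_) i
        · simp
        · simpa using hl j
      · simp [Fin.sum_univ_succ, hx x]
    · push Not at hc
      obtain ⟨z, hz, hcz⟩ := hc
      have haz : a 0 z < 0 := by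
        by_contra hn
        push Not at hn
        have := h z (fun i => Fin.cases hn hz i)
        linarith
      obtain ⟨w, hw, hcw, h0w⟩ : ∃ w, (∀ i : Fin m, 0 ≤ a i.succ w) ∧ c w < 0 ∧ a 0 w = -1 := by
        have hp : 0 < (-(a 0 z))⁻¹ := inv_pos.2 (by linarith)
        refine ⟨(-(a 0 z))⁻¹ • z, fun i => ?_, ?_, ?_⟩
        · rw [map_smul, smul_eq_mul]
          exact mul_nonneg hp.le (hz i)
        · rw [map_smul, smul_eq_mul]
          exact mul_neg_of_pos_of_neg hp hcz
        · rw [map_smul, smul_eq_mul]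
          have : a 0 z ≠ 0 := haz.ne
          field_simp
      obtain ⟨l, hl, hx⟩ := ih (fun i => a i.succ + (a i.succ w) • a 0) (c + (c w) • a 0) (by
        intro x hx
        have := h (x + a 0 x • w) (fun i => by
          refine Fin.cases ?_ (fun j => ?_) i
          · simp [h0w]
          · have := hx j
            simp only [LinearMap.add_apply, LinearMap.smul_apply, smul_eq_mul, map_add,
              map_smul] at this ⊢
            linarith)
        simp only [LinearMap.add_apply, LinearMap.smul_apply, smul_eq_mul, map_add,
              map_smul] at this ⊢
        linarith)
      refine ⟨Fin.cons (∑ i, l i * a i.succ w - c w) l, fun i => ?_, fun x => ?_⟩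
      · refine Fin.cases ?_ (fun j => ?_) i
        · have : 0 ≤ ∑ i, l i * a i.succ w :=
            Finset.sum_nonneg fun i _ => mul_nonneg (hl i) (hw i)
          simp only [Fin.cons_zero]
          linarith
        · simpa using hl j
      · have := hx x
        simp only [LinearMap.add_apply, LinearMap.smul_apply, smul_eq_mul, mul_add,
          Finset.sum_add_distrib, ← mul_assoc, ← Finset.sum_mul] at this
        simp only [Fin.sum_univ_succ, Fin.cons_zero, Fin.cons_succ]
        linarith

/-- Linear programming strong duality for the second-stage problem: if both the
primal feasible set `{y : W y ≥ b}` and the dual feasible set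
`{γ : γ ≥ 0, Wᵀγ = q}` are nonempty, then
`sInf { qᵀy : W y ≥ b } = sSup { γᵀb : γ ≥ 0, Wᵀγ = q }` and both values are
finite (the primal values are bounded below and the dual values bounded above). -/
theorem lp_strong_duality_second_stage (m n : ℕ)
    (W : Matrix (Fin m) (Fin n) ℝ) (q : Fin n → ℝ) (b : Fin m → ℝ)
    (hprimal : {y : Fin n → ℝ | b ≤ W *ᵥ y}.Nonempty)
    (hdual : {γ : Fin m → ℝ | 0 ≤ γ ∧ Wᵀ *ᵥ γ = q}.Nonempty) :
    sInf {z : ℝ | ∃ y : Fin n → ℝ, b ≤ W *ᵥ y ∧ z = q ⬝ᵥ y} =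
      sSup {z : ℝ | ∃ γ : Fin m → ℝ, 0 ≤ γ ∧ Wᵀ *ᵥ γ = q ∧ z = γ ⬝ᵥ b} ∧
    BddBelow {z : ℝ | ∃ y : Fin n → ℝ, b ≤ W *ᵥ y ∧ z = q ⬝ᵥ y} ∧
    BddAbove {z : ℝ | ∃ γ : Fin m → ℝ, 0 ≤ γ ∧ Wᵀ *ᵥ γ = q ∧ z = γ ⬝ᵥ b} := by
  have swap : ∀ γ y, (Wᵀ *ᵥ γ) ⬝ᵥ y = γ ⬝ᵥ (W *ᵥ y) := by
    intro γ y
    rw [Matrix.mulVec_transpose, Matrix.dotProduct_mulVec]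
  have weak : ∀ (γ : Fin m → ℝ) (y : Fin n → ℝ), 0 ≤ γ → Wᵀ *ᵥ γ = q → b ≤ W *ᵥ y →
      γ ⬝ᵥ b ≤ q ⬝ᵥ y := by
    intro γ y h0 hq hy
    rw [← hq, swap]
    exact dotProduct_le_dotProduct_of_nonneg_left hy h0
  obtain ⟨y₀, hy₀⟩ := hprimal
  obtain ⟨γ₀, hγ₀, hγq⟩ := hdual
  have hbb : BddBelow {z : ℝ | ∃ y : Fin n → ℝ, b ≤ W *ᵥ y ∧ z = q ⬝ᵥ y} := by
    refine ⟨γ₀ ⬝ᵥ b, ?_⟩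
    rintro z ⟨y, hy, rfl⟩
    exact weak _ _ hγ₀ hγq hy
  have hba : BddAbove {z : ℝ | ∃ γ : Fin m → ℝ, 0 ≤ γ ∧ Wᵀ *ᵥ γ = q ∧ z = γ ⬝ᵥ b} := by
    refine ⟨q ⬝ᵥ y₀, ?_⟩
    rintro z ⟨γ, h0, hq, rfl⟩
    exact weak _ _ h0 hq hy₀
  refine ⟨le_antisymm ?_ ?_, hbb, hba⟩
  · set v := sInf {z : ℝ | ∃ y : Fin n → ℝ, b ≤ W *ᵥ y ∧ z = q ⬝ᵥ y} with hv
    have hvle : ∀ y, b ≤ W *ᵥ y → v ≤ q ⬝ᵥ y := fun y hy => csInf_le hbb ⟨y, hy, rfl⟩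
    let A : Fin (m + 1) → (((Fin n → ℝ) × ℝ) →ₗ[ℝ] ℝ) :=
      Fin.cons (LinearMap.snd ℝ _ _) (fun i =>
        (LinearMap.proj i ∘ₗ W.mulVecLin) ∘ₗ LinearMap.fst ℝ _ _ - b i • LinearMap.snd ℝ _ _)
    let C : ((Fin n → ℝ) × ℝ) →ₗ[ℝ] ℝ :=
      (dotProductBilin ℝ ℝ q) ∘ₗ LinearMap.fst ℝ _ _ - v • LinearMap.snd ℝ _ _
    have hA0 : ∀ y t, A 0 (y, t) = t := fun y t => by simp [A]
    have hAs : ∀ (i : Fin m) y t, A i.succ (y, t) = (W *ᵥ y) i - b i * t := fun i y t => by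
      simp [A]
    have hC : ∀ y t, C (y, t) = q ⬝ᵥ y - v * t := fun y t => by
      simp [C]
    obtain ⟨l, hl, hx⟩ := farkas_aux (m + 1) A C (by
      rintro ⟨y, t⟩ h
      have ht : 0 ≤ t := by simpa only [hA0] using h 0
      have hi : ∀ i, 0 ≤ (W *ᵥ y) i - b i * t := fun i => by
        simpa only [hAs] using h i.succ
      rw [hC]
      rcases ht.eq_or_lt with rfl | ht
      · have : 0 ≤ γ₀ ⬝ᵥ (W *ᵥ y) :=
          Finset.sum_nonneg fun i _ => mul_nonneg (hγ₀ i) (by simpa using hi i)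
        rw [← swap, hγq] at this
        linarith
      · have := hvle (t⁻¹ • y) (fun i => by
          rw [Matrix.mulVec_smul, Pi.smul_apply, smul_eq_mul, inv_mul_eq_div, le_div_iff₀ ht]
          linarith [hi i])
        rw [dotProduct_smul, smul_eq_mul, inv_mul_eq_div, le_div_iff₀ ht] at this
        linarith)
    have key : ∀ y t, q ⬝ᵥ y - v * t = l 0 * t + ∑ i : Fin m, l i.succ * ((W *ᵥ y) i - b i * t) := by
      intro y t
      rw [← hC, hx, Fin.sum_univ_succ]
      simp only [hA0, hAs]
    have hb : v ≤ (fun i : Fin m => l i.succ) ⬝ᵥ b := by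
      have := key 0 1
      simp at this
      simp only [dotProduct]
      linarith [hl 0]
    refine hb.trans (le_csSup hba ⟨fun i => l i.succ, fun i => hl _, ?_, rfl⟩)
    refine dotProduct_eq _ _ fun y => ?_
    rw [swap]
    have := key y 0
    simp at this
    rw [this]
    rfl
  · refine csSup_le ⟨_, γ₀, hγ₀, hγq, rfl⟩ ?_
    rintro z ⟨γ, h0, hq, rfl⟩
    refine le_csInf ⟨_, y₀, hy₀, rfl⟩ ?_
    rintro z ⟨y, hy, rfl⟩
    exact weak _ _ h0 hq hy
end

section
/- Let W be an m×n real matrix, T an m×k real matrix, q ∈ ℝⁿ, h ∈ ℝᵐ, c ∈ ℝᵏ, and X ⊆ ℝᵏ. Suppose γ ∈ ℝᵐ satisfies γ ≥ 0 and Wᵀγ = q; suppose x* ∈ X satisfies (c − Tᵀγ)ᵀx* ≤ (c − Tᵀγ)ᵀx for all x ∈ X; and suppose y* ∈ ℝⁿ satisfies W y* ≥ h − T x* and qᵀy* = γᵀ(h − T x*). Then (x*, y*) is optimal for the full two-stage problem: for every x ∈ X and y with W y ≥ h − T x, one has cᵀx + qᵀy ≥ cᵀx* + qᵀy*. -/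
open Matrix

/-- Optimality certificate for the full two-stage problem: a dual-feasible `γ`,
a minimizer `x*` of the pricing problem with modified costs `c - Tᵀγ`, and a
second-stage point `y*` with zero duality gap together certify optimality of
`(x*, y*)`. -/
theorem two_stage_optimality_certificate (m n k : ℕ)
    (W : Matrix (Fin m) (Fin n) ℝ) (T : Matrix (Fin m) (Fin k) ℝ)
    (q : Fin n → ℝ) (h : Fin m → ℝ) (c : Fin k → ℝ)
    (X : Set (Fin k → ℝ)) (γ : Fin m → ℝ)
    (xstar : Fin k → ℝ) (ystar : Fin n → ℝ)
    (hγ : 0 ≤ γ) (hdual : Wᵀ *ᵥ γ = q)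
    (hxmem : xstar ∈ X)
    (hxmin : ∀ x ∈ X, (c - Tᵀ *ᵥ γ) ⬝ᵥ xstar ≤ (c - Tᵀ *ᵥ γ) ⬝ᵥ x)
    (hyfeas : h - T *ᵥ xstar ≤ W *ᵥ ystar)
    (hgap : q ⬝ᵥ ystar = γ ⬝ᵥ (h - T *ᵥ xstar)) :
    ∀ x ∈ X, ∀ y : Fin n → ℝ, h - T *ᵥ x ≤ W *ᵥ y →
      c ⬝ᵥ xstar + q ⬝ᵥ ystar ≤ c ⬝ᵥ x + q ⬝ᵥ y := by
  intro x hx y hy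
  have h1 := hxmin x hx
  have h2 : γ ⬝ᵥ (h - T *ᵥ x) ≤ γ ⬝ᵥ (W *ᵥ y) :=
    dotProduct_le_dotProduct_of_nonneg_left hy hγ
  have hT : ∀ z, (Tᵀ *ᵥ γ) ⬝ᵥ z = γ ⬝ᵥ (T *ᵥ z) := fun z => by
    rw [mulVec_transpose, dotProduct_mulVec]
  have hW : q ⬝ᵥ y = γ ⬝ᵥ (W *ᵥ y) := by
    rw [← hdual, mulVec_transpose, dotProduct_mulVec]
  rw [sub_dotProduct, sub_dotProduct, hT, hT] at h1
  rw [dotProduct_sub] at h2 hgap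
  linarith
end
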